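/- For the pointer-chasing source μ = μ_{r,n,ℓ} and any ρ-round protocol transcript Π^ρ satisfying IC_ext_μ(Π) ≥ L and IC_int_μ(Π) ≤ C, one has H(B_{i_r} | Π^ρ) ≤ ℓ + C - L + 2·log₂ n, where i_r is the chased pointer index and B_{i_r} = A_{i_r} is the shared string. -/

import Mathlib

open Finset

noncomputable section

/-- `p` is a probability mass function on the finite type `Ω`. -/
def IsPMF {Ω : Type*} [Fintype Ω] (p : Ω → ℝ) : Prop :=
  (∀ ω, 0 ≤ p ω) ∧ ∑ ω, p ω = 1

/-- Probability that the random variable `X` equals `x` under `p`. -/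
def pr {Ω α : Type*} [Fintype Ω] [DecidableEq α] (p : Ω → ℝ) (X : Ω → α) (x : α) : ℝ :=
  ∑ ω, if X ω = x then p ω else 0

/-- Shannon entropy (base 2) of a distribution `q` on a finite type. -/
def Hq {α : Type*} [Fintype α] (q : α → ℝ) : ℝ :=
  ∑ x, -(q x * Real.logb 2 (q x))

/-- Shannon entropy (base 2) of the random variable `X` under `p`. -/
def Hent {Ω α : Type*} [Fintype Ω] [Fintype α] [DecidableEq α] (p : Ω → ℝ) (X : Ω → α) : ℝ :=
  Hq (pr p X)

/-- Conditional entropy `H(X|Y) = H(X,Y) - H(Y)`. -/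
def condH {Ω α β : Type*} [Fintype Ω] [Fintype α] [Fintype β] [DecidableEq α] [DecidableEq β]
    (p : Ω → ℝ) (X : Ω → α) (Y : Ω → β) : ℝ :=
  Hent p (fun ω => (X ω, Y ω)) - Hent p Y

/-- Mutual information `I(X;Y)`. -/
def MI {Ω α β : Type*} [Fintype Ω] [Fintype α] [Fintype β] [DecidableEq α] [DecidableEq β]
    (p : Ω → ℝ) (X : Ω → α) (Y : Ω → β) : ℝ :=
  Hent p X + Hent p Y - Hent p (fun ω => (X ω, Y ω))

/-- Conditional mutual information `I(X;Y|Z) = H(X|Z) - H(X|(Y,Z))`. -/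
def condMI {Ω α β γ : Type*} [Fintype Ω] [Fintype α] [Fintype β] [Fintype γ]
    [DecidableEq α] [DecidableEq β] [DecidableEq γ]
    (p : Ω → ℝ) (X : Ω → α) (Y : Ω → β) (Z : Ω → γ) : ℝ :=
  condH p X Z - condH p X (fun ω => (Y ω, Z ω))

/-- Total variation distance between distributions on a finite type. -/
def TV {α : Type*} [Fintype α] (q₁ q₂ : α → ℝ) : ℝ :=
  (∑ x, |q₁ x - q₂ x|) / 2

/-- Binary entropy function (base 2). -/
def binEnt (d : ℝ) : ℝ :=
  -(d * Real.logb 2 d) - ((1 - d) * Real.logb 2 (1 - d))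

/-- Min-entropy (base 2) of a distribution on a nonempty finite type. -/
def Hinf {α : Type*} [Fintype α] [Nonempty α] (q : α → ℝ) : ℝ :=
  -Real.logb 2 (⨆ x, q x)

/-- Sample space of the pointer-chasing source `μ_{r,n,ℓ}`. -/
abbrev PCOmega (r n ℓ : ℕ) : Type :=
  Fin n × (Fin r → Equiv.Perm (Fin n)) × (Fin n → Fin ℓ → Bool) × (Fin n → Fin ℓ → Bool)

/-- The chased pointer `π_r(π_{r-1}(⋯π₁(i)⋯))`. -/
def chase {r n : ℕ} (π : Fin r → Equiv.Perm (Fin n)) (i : Fin n) : Fin n :=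
  (List.ofFn π).foldl (fun a σ => σ a) i

/-- The pmf of the pointer-chasing source `μ_{r,n,ℓ}`. -/
def pcSource (r n ℓ : ℕ) : PCOmega r n ℓ → ℝ := fun ω =>
  if ω.2.2.1 (chase ω.2.1 ω.1) = ω.2.2.2 (chase ω.2.1 ω.1) then
    ((n : ℝ) * (Nat.factorial n : ℝ) ^ r * 2 ^ (n * ℓ) * 2 ^ ((n - 1) * ℓ))⁻¹
  else 0

/-- Alice's input `X`. -/
def aliceInput {r n ℓ : ℕ} (ω : PCOmega r n ℓ) :
    ({k : Fin r // k.val % 2 = 0} → Equiv.Perm (Fin n)) × (Fin n → Fin ℓ → Bool) :=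
  (fun k => ω.2.1 k.val, ω.2.2.1)

/-- Bob's input `Y`. -/
def bobInput {r n ℓ : ℕ} (ω : PCOmega r n ℓ) :
    Fin n × ({k : Fin r // k.val % 2 = 1} → Equiv.Perm (Fin n)) × (Fin n → Fin ℓ → Bool) :=
  (ω.1, fun k => ω.2.1 k.val, ω.2.2.2)

instance {r n ℓ : ℕ} :
    DecidableEq ((({ k : Fin r // k.val % 2 = 0 } → Equiv.Perm (Fin n)) × (Fin n → Fin ℓ → Bool)) ×
      (Fin n × ({ k : Fin r // k.val % 2 = 1 } → Equiv.Perm (Fin n)) × (Fin n → Fin ℓ → Bool))) :=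
  instDecidableEqProd

/-- Entropy as an expectation over the sample space. -/
theorem Hent_eq_sum {Ω α : Type*} [Fintype Ω] [Fintype α] [DecidableEq α]
    (p : Ω → ℝ) (X : Ω → α) :
    Hent p X = -∑ ω, p ω * Real.logb 2 (pr p X (X ω)) := by
  unfold Hent Hq
  rw [Finset.sum_neg_distrib]
  congr 1
  have h : ∀ x, pr p X x * Real.logb 2 (pr p X x)
      = ∑ ω, if X ω = x then p ω * Real.logb 2 (pr p X x) else 0 := fun x => by
    conv_lhs => enter [1]; unfold pr
    rw [Finset.sum_mul]
    exact Finset.sum_congr rfl fun ω _ => by split_ifs <;> simp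
  simp_rw [h]
  rw [Finset.sum_comm]
  simp

theorem pr_nonneg {Ω α : Type*} [Fintype Ω] [DecidableEq α] {p : Ω → ℝ}
    (hp : ∀ ω, 0 ≤ p ω) (X : Ω → α) (x : α) : 0 ≤ pr p X x :=
  Finset.sum_nonneg fun ω _ => by split_ifs <;> simp [hp]

theorem le_pr_apply {Ω α : Type*} [Fintype Ω] [DecidableEq α] {p : Ω → ℝ}
    (hp : ∀ ω, 0 ≤ p ω) (X : Ω → α) (ω : Ω) : p ω ≤ pr p X (X ω) := by
  have h := Finset.single_le_sum (f := fun ω' => if X ω' = X ω then p ω' else 0)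
    (fun ω' _ => by split_ifs <;> simp [hp]) (Finset.mem_univ ω)
  simpa [pr] using h

theorem sum_pr_mul {Ω α : Type*} [Fintype Ω] [Fintype α] [DecidableEq α]
    (p : Ω → ℝ) (X : Ω → α) (f : α → ℝ) : ∑ x, pr p X x * f x = ∑ ω, p ω * f (X ω) := by
  simp_rw [pr, Finset.sum_mul, ite_mul, zero_mul]
  rw [Finset.sum_comm]
  simp

theorem sum_pr {Ω α : Type*} [Fintype Ω] [Fintype α] [DecidableEq α]
    (p : Ω → ℝ) (X : Ω → α) : ∑ x, pr p X x = ∑ ω, p ω := by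
  simpa using sum_pr_mul p X fun _ => 1

theorem sum_pr_pair {Ω α β : Type*} [Fintype Ω] [Fintype α] [DecidableEq α] [DecidableEq β]
    (p : Ω → ℝ) (X : Ω → α) (Z : Ω → β) (z : β) :
    ∑ x, pr p (fun ω => (X ω, Z ω)) (x, z) = pr p Z z := by
  simp_rw [pr]
  rw [Finset.sum_comm]
  refine Finset.sum_congr rfl fun ω _ => ?_
  by_cases h : Z ω = z <;> simp [h]

/-- If `X` almost surely determines `Y`, then `H(Y) ≤ H(X)`. -/
theorem Hent_le_of_determined {Ω α β : Type*} [Fintype Ω] [Fintype α] [Fintype β]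
    [DecidableEq α] [DecidableEq β] {p : Ω → ℝ} (hp : ∀ ω, 0 ≤ p ω) (X : Ω → α) (Y : Ω → β)
    (h : ∀ ω ω', p ω ≠ 0 → p ω' ≠ 0 → X ω = X ω' → Y ω = Y ω') : Hent p Y ≤ Hent p X := by
  rw [Hent_eq_sum, Hent_eq_sum, neg_le_neg_iff]
  refine Finset.sum_le_sum fun ω _ => ?_
  rcases (hp ω).eq_or_lt with h0 | h0
  · simp [← h0]
  refine mul_le_mul_of_nonneg_left ?_ h0.le
  refine Real.logb_le_logb_of_le (by norm_num) (h0.trans_le (le_pr_apply hp X ω)) ?_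
  refine Finset.sum_le_sum fun ω' _ => ?_
  by_cases h1 : p ω' = 0
  · simp [h1]
  by_cases h2 : X ω' = X ω
  · rw [if_pos h2, if_pos (h _ _ h1 h0.ne' h2)]
  · rw [if_neg h2]
    split_ifs <;> simp [hp]

/-- Gibbs inequality: entropy is at most the cross entropy with a subprobability `g`. -/
theorem Hent_le_crossEntropy {Ω α : Type*} [Fintype Ω] [Fintype α] [DecidableEq α]
    {p : Ω → ℝ} (hp : IsPMF p) (X : Ω → α) (g : α → ℝ) (hg : ∀ x, 0 ≤ g x)
    (hg1 : ∑ x, g x ≤ 1) (hpos : ∀ ω, 0 < p ω → 0 < g (X ω)) :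
    Hent p X ≤ -∑ ω, p ω * Real.logb 2 (g (X ω)) := by
  rw [Hent_eq_sum, neg_le_neg_iff, ← sub_nonpos, ← Finset.sum_sub_distrib]
  have hlog : 0 < Real.log 2 := Real.log_pos (by norm_num)
  have key : ∀ ω, p ω * Real.logb 2 (g (X ω)) - p ω * Real.logb 2 (pr p X (X ω))
      ≤ (p ω * (g (X ω) / pr p X (X ω)) - p ω) / Real.log 2 := fun ω => by
    rcases (hp.1 ω).eq_or_lt with h0 | h0
    · simp [← h0]
    have h1 := hpos ω h0
    have h2 := h0.trans_le (le_pr_apply hp.1 X ω)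
    have h3 := Real.log_le_sub_one_of_pos (div_pos h1 h2)
    rw [Real.log_div h1.ne' h2.ne'] at h3
    rw [le_div_iff₀ hlog, Real.logb, Real.logb]
    have h4 := mul_le_mul_of_nonneg_left h3 h0.le
    field_simp at h4 ⊢
    linarith
  refine (Finset.sum_le_sum fun ω _ => key ω).trans ?_
  rw [← Finset.sum_div, Finset.sum_sub_distrib, hp.2,
    ← sum_pr_mul p X fun x => g x / pr p X x]
  refine div_nonpos_of_nonpos_of_nonneg ?_ hlog.le
  refine sub_nonpos.2 (le_trans (Finset.sum_le_sum fun x _ => ?_) hg1)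
  by_cases h : pr p X x = 0
  · simp [h, hg]
  · rw [mul_div_cancel₀ _ h]

theorem Hent_le_logb_card {Ω α : Type*} [Fintype Ω] [Fintype α] [DecidableEq α] [Nonempty α]
    {p : Ω → ℝ} (hp : IsPMF p) (X : Ω → α) : Hent p X ≤ Real.logb 2 (Fintype.card α) := by
  have hc : (0 : ℝ) < Fintype.card α := by exact_mod_cast Fintype.card_pos
  refine (Hent_le_crossEntropy hp X (fun _ => (Fintype.card α : ℝ)⁻¹) (fun _ => by positivity)
    (by simp [hc.ne']) (fun _ _ => by positivity)).trans ?_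
  rw [← Finset.sum_mul, hp.2, Real.logb_inv]
  simp

theorem Hent_pair_le_add_logb_card {Ω α β : Type*} [Fintype Ω] [Fintype α] [Fintype β]
    [DecidableEq α] [DecidableEq β] [Nonempty β] {p : Ω → ℝ} (hp : IsPMF p)
    (X : Ω → α) (W : Ω → β) :
    Hent p (fun ω => (X ω, W ω)) ≤ Hent p X + Real.logb 2 (Fintype.card β) := by
  have hc : (0 : ℝ) < Fintype.card β := by exact_mod_cast Fintype.card_pos
  have hX := pr_nonneg hp.1 X
  refine (Hent_le_crossEntropy hp _ (fun y => pr p X y.1 / (Fintype.card β : ℝ))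
    (fun y => div_nonneg (hX _) hc.le) ?_
    (fun ω h => div_pos (h.trans_le (le_pr_apply hp.1 X ω)) hc)).trans ?_
  · rw [Fintype.sum_prod_type]
    simp only [Finset.sum_const, Finset.card_univ, nsmul_eq_mul]
    simp_rw [mul_div_cancel₀ _ hc.ne']
    rw [sum_pr, hp.2]
  · rw [Hent_eq_sum p X]
    have : ∀ ω, p ω * Real.logb 2 (pr p X (X ω) / (Fintype.card β : ℝ))
        = p ω * Real.logb 2 (pr p X (X ω)) - p ω * Real.logb 2 (Fintype.card β) := fun ω => by
      rcases (hp.1 ω).eq_or_lt with h0 | h0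
      · simp [← h0]
      rw [Real.logb_div (h0.trans_le (le_pr_apply hp.1 X ω)).ne' hc.ne', mul_sub]
    simp_rw [this]
    rw [Finset.sum_sub_distrib, ← Finset.sum_mul, hp.2]
    linarith

/-- Submodularity of entropy. -/
theorem Hent_submodular {Ω α β γ : Type*} [Fintype Ω] [Fintype α] [Fintype β] [Fintype γ]
    [DecidableEq α] [DecidableEq β] [DecidableEq γ] {p : Ω → ℝ} (hp : IsPMF p)
    (U : Ω → α) (V : Ω → β) (Z : Ω → γ) :
    Hent p (fun ω => (U ω, V ω, Z ω)) + Hent p Z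
      ≤ Hent p (fun ω => (U ω, Z ω)) + Hent p (fun ω => (V ω, Z ω)) := by
  set UZ : Ω → α × γ := fun ω => (U ω, Z ω)
  set VZ : Ω → β × γ := fun ω => (V ω, Z ω)
  have hpos : ∀ ω, 0 < p ω → 0 < pr p UZ (UZ ω) ∧ 0 < pr p VZ (VZ ω) ∧ 0 < pr p Z (Z ω) :=
    fun ω h => ⟨h.trans_le (le_pr_apply hp.1 _ ω), h.trans_le (le_pr_apply hp.1 _ ω),
      h.trans_le (le_pr_apply hp.1 _ ω)⟩
  have key := Hent_le_crossEntropy hp (fun ω => (U ω, V ω, Z ω))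
    (fun y => pr p UZ (y.1, y.2.2) * pr p VZ (y.2.1, y.2.2) / pr p Z y.2.2)
    (fun y => div_nonneg (mul_nonneg (pr_nonneg hp.1 _ _) (pr_nonneg hp.1 _ _))
      (pr_nonneg hp.1 _ _)) ?_
    (fun ω h => by obtain ⟨h1, h2, h3⟩ := hpos ω h; exact div_pos (mul_pos h1 h2) h3)
  · have : ∀ ω, p ω * Real.logb 2 (pr p UZ (U ω, Z ω) * pr p VZ (V ω, Z ω) / pr p Z (Z ω))
        = p ω * Real.logb 2 (pr p UZ (UZ ω)) + p ω * Real.logb 2 (pr p VZ (VZ ω))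
          - p ω * Real.logb 2 (pr p Z (Z ω)) := fun ω => by
      rcases (hp.1 ω).eq_or_lt with h0 | h0
      · simp [← h0]
      obtain ⟨h1, h2, h3⟩ := hpos ω h0
      rw [Real.logb_div (mul_pos h1 h2).ne' h3.ne', Real.logb_mul h1.ne' h2.ne']
      ring
    simp only [this] at key
    rw [Finset.sum_sub_distrib, Finset.sum_add_distrib] at key
    rw [Hent_eq_sum p Z, Hent_eq_sum p UZ, Hent_eq_sum p VZ]
    linarith
  · simp_rw [Fintype.sum_prod_type]
    have h1 : ∀ x, ∑ y, ∑ z, pr p UZ (x, z) * pr p VZ (y, z) / pr p Z z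
        = ∑ z, pr p UZ (x, z) * (pr p Z z / pr p Z z) := fun x => by
      rw [Finset.sum_comm]
      refine Finset.sum_congr rfl fun z _ => ?_
      rw [← Finset.sum_div, ← Finset.mul_sum, sum_pr_pair, mul_div_assoc]
    simp_rw [h1]
    rw [Finset.sum_comm, ← hp.2, ← sum_pr p Z]
    refine Finset.sum_le_sum fun z _ => ?_
    rw [← Finset.sum_mul, sum_pr_pair]
    exact (mul_le_of_le_one_right (pr_nonneg hp.1 _ _) (div_self_le_one _))

/-- If `S` is almost surely a function of `(X, W)` and also of `(Y, W)`, where `W` takes values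
in `δ`, then `H(S | P) ≤ I(X; Y | P) + 2 log |δ|`. -/
theorem Hent_common_part_le {Ω α β γ δ σ : Type*} [Fintype Ω] [Fintype α] [Fintype β] [Fintype γ]
    [Fintype δ] [Fintype σ] [DecidableEq α] [DecidableEq β] [DecidableEq γ] [DecidableEq δ]
    [DecidableEq σ] [Nonempty δ] {p : Ω → ℝ} (hp : IsPMF p)
    (X : Ω → α) (Y : Ω → β) (P : Ω → γ) (W : Ω → δ) (S : Ω → σ)
    (hX : ∀ ω ω', p ω ≠ 0 → p ω' ≠ 0 → X ω = X ω' → W ω = W ω' → S ω = S ω')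
    (hY : ∀ ω ω', p ω ≠ 0 → p ω' ≠ 0 → Y ω = Y ω' → W ω = W ω' → S ω = S ω') :
    Hent p (fun ω => (S ω, P ω)) + Hent p (fun ω => (P ω, X ω, Y ω))
      ≤ Hent p (fun ω => (P ω, X ω)) + Hent p (fun ω => (P ω, Y ω))
        + 2 * Real.logb 2 (Fintype.card δ) := by
  have h1 := Hent_submodular hp X Y fun ω => (P ω, W ω, S ω)
  have h2 := Hent_le_of_determined hp.1 (fun ω => ((P ω, X ω), W ω))
    (fun ω => (X ω, P ω, W ω, S ω)) fun ω ω' h h' e => by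
      simp only [Prod.mk.injEq] at e ⊢
      exact ⟨e.1.2, e.1.1, e.2, hX ω ω' h h' e.1.2 e.2⟩
  have h3 := Hent_le_of_determined hp.1 (fun ω => ((P ω, Y ω), W ω))
    (fun ω => (Y ω, P ω, W ω, S ω)) fun ω ω' h h' e => by
      simp only [Prod.mk.injEq] at e ⊢
      exact ⟨e.1.2, e.1.1, e.2, hY ω ω' h h' e.1.2 e.2⟩
  have h4 := Hent_pair_le_add_logb_card hp (fun ω => (P ω, X ω)) W
  have h5 := Hent_pair_le_add_logb_card hp (fun ω => (P ω, Y ω)) W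
  have h6 := Hent_le_of_determined hp.1 (fun ω => (X ω, Y ω, P ω, W ω, S ω))
    (fun ω => (P ω, X ω, Y ω)) fun ω ω' _ _ e => by
      simp only [Prod.mk.injEq] at e ⊢
      exact ⟨e.2.2.1, e.1, e.2.1⟩
  have h7 := Hent_le_of_determined hp.1 (fun ω => (P ω, W ω, S ω))
    (fun ω => (S ω, P ω)) fun ω ω' _ _ e => by
      simp only [Prod.mk.injEq] at e ⊢
      exact ⟨e.2.2, e.1⟩
  linarith

/-- Internal minus external information: `IC_int - IC_ext = I(X; Y | P) - I(X; Y)`. -/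
theorem condMI_add_condMI_sub_MI {Ω α β γ : Type*} [Fintype Ω] [Fintype α] [Fintype β] [Fintype γ]
    [DecidableEq α] [DecidableEq β] [DecidableEq γ] {p : Ω → ℝ} (hp : ∀ ω, 0 ≤ p ω)
    (X : Ω → α) (Y : Ω → β) (P : Ω → γ) :
    condMI p P X Y + condMI p P Y X - MI p P (fun ω => (X ω, Y ω))
      = Hent p (fun ω => (P ω, X ω)) + Hent p (fun ω => (P ω, Y ω))
        - Hent p (fun ω => (P ω, X ω, Y ω)) - Hent p P - MI p X Y := by
  have hswap : Hent p (fun ω => (Y ω, X ω)) = Hent p (fun ω => (X ω, Y ω)) := by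
    apply le_antisymm <;> refine Hent_le_of_determined hp _ _ fun ω ω' _ _ e => ?_ <;>
      simp only [Prod.mk.injEq] at e ⊢ <;> exact e.symm
  have hswapP : Hent p (fun ω => (P ω, Y ω, X ω)) = Hent p (fun ω => (P ω, X ω, Y ω)) := by
    apply le_antisymm <;> refine Hent_le_of_determined hp _ _ fun ω ω' _ _ e => ?_ <;>
      simp only [Prod.mk.injEq] at e ⊢ <;> exact ⟨e.1, e.2.symm⟩
  unfold condMI MI condH
  rw [hswap, hswapP]
  ring

theorem aliceInput_bobInput_injective {r n ℓ : ℕ} {s s' : PCOmega r n ℓ}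
    (ha : aliceInput s = aliceInput s') (hb : bobInput s = bobInput s') : s = s' := by
  obtain ⟨i, π, A, B⟩ := s
  obtain ⟨i', π', A', B'⟩ := s'
  simp only [aliceInput, bobInput, Prod.mk.injEq] at ha hb ⊢
  refine ⟨hb.1, funext fun k => ?_, ha.2, hb.2.2⟩
  rcases Nat.mod_two_eq_zero_or_one k.val with h | h
  · exact congrFun ha.1 ⟨k, h⟩
  · exact congrFun hb.2.1 ⟨k, h⟩

theorem card_aliceInput_mul_card_bobInput (r n ℓ : ℕ) (hn : 0 < n) :
    (Fintype.card (({k : Fin r // k.val % 2 = 0} → Equiv.Perm (Fin n)) × (Fin n → Fin ℓ → Bool))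
      : ℝ) * (Fintype.card (Fin n × ({k : Fin r // k.val % 2 = 1} → Equiv.Perm (Fin n)) ×
        (Fin n → Fin ℓ → Bool)) : ℝ)
      = (n : ℝ) * (Nat.factorial n : ℝ) ^ r * 2 ^ (n * ℓ) * 2 ^ ((n - 1) * ℓ) * 2 ^ ℓ := by
  have hr : Fintype.card {k : Fin r // k.val % 2 = 0} + Fintype.card {k : Fin r // k.val % 2 = 1}
      = r := by
    have h := Fintype.card_subtype_compl fun k : Fin r => k.val % 2 = 0
    have h' : Fintype.card {k : Fin r // ¬ k.val % 2 = 0}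
        = Fintype.card {k : Fin r // k.val % 2 = 1} :=
      Fintype.card_congr (Equiv.subtypeEquivRight fun k => by omega)
    have h'' := Fintype.card_subtype_le fun k : Fin r => k.val % 2 = 0
    rw [Fintype.card_fin] at h h''
    omega
  obtain ⟨m, rfl⟩ : ∃ m, n = m + 1 := ⟨n - 1, by omega⟩
  simp only [Fintype.card_prod, Fintype.card_fun, Fintype.card_perm, Fintype.card_fin,
    Fintype.card_bool, Nat.add_sub_cancel]
  conv_rhs => rw [← hr]
  push_cast
  ring

theorem Hent_fst_of_marginal {r n ℓ : ℕ} [DecidableEq (PCOmega r n ℓ)] {γ : Type*} [Fintype γ]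
    {q : PCOmega r n ℓ × γ → ℝ} (hq : IsPMF q)
    (hmarg : ∀ s, (∑ t, q (s, t)) = pcSource r n ℓ s) :
    Hent q Prod.fst
      = Real.logb 2 ((n : ℝ) * (Nat.factorial n : ℝ) ^ r * 2 ^ (n * ℓ) * 2 ^ ((n - 1) * ℓ)) := by
  have hpr : pr q Prod.fst = pcSource r n ℓ := by
    funext s
    rw [← hmarg s, pr, Fintype.sum_prod_type]
    rw [Finset.sum_eq_single s] <;> simp +contextual
  have hsum : ∑ s, pcSource r n ℓ s = 1 := by rw [← hpr, sum_pr, hq.2]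
  rw [Hent, hpr, Hq, ← one_mul (Real.logb 2 _), ← hsum, Finset.sum_mul]
  refine Finset.sum_congr rfl fun s _ => ?_
  unfold pcSource
  split_ifs
  · rw [Real.logb_inv]; ring
  · simp

/-- The inputs of the pointer-chasing source have mutual information at most `ℓ`. -/
theorem MI_inputs_le (r n ℓ : ℕ) (hn : 0 < n) {γ : Type*} [Fintype γ]
    {q : PCOmega r n ℓ × γ → ℝ} (hq : IsPMF q)
    (hmarg : ∀ s, (∑ t, q (s, t)) = pcSource r n ℓ s) :
    MI q (fun ω => aliceInput ω.1) (fun ω => bobInput ω.1) ≤ ℓ := by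
  have : Nonempty (Fin n) := ⟨⟨0, hn⟩⟩
  have h1 := Hent_le_logb_card hq fun ω => aliceInput ω.1
  have h2 := Hent_le_logb_card hq fun ω => bobInput ω.1
  have : DecidableEq (PCOmega r n ℓ) := Classical.decEq _
  have h3 := Hent_le_of_determined hq.1 (fun ω => (aliceInput ω.1, bobInput ω.1)) Prod.fst
    fun ω ω' _ _ e => by
      rw [Prod.mk.injEq] at e
      exact aliceInput_bobInput_injective e.1 e.2
  rw [Hent_fst_of_marginal hq hmarg] at h3
  have h4 := congrArg (Real.logb 2) (card_aliceInput_mul_card_bobInput r n ℓ hn)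
  have hfac : (0 : ℝ) < Nat.factorial n := by exact_mod_cast Nat.factorial_pos n
  have hn' : (0 : ℝ) < n := by exact_mod_cast hn
  rw [Real.logb_mul (by exact_mod_cast Fintype.card_ne_zero)
    (by exact_mod_cast Fintype.card_ne_zero), Real.logb_mul (by positivity) (by positivity),
    Real.logb_pow, Real.logb_self_eq_one (by norm_num), mul_one] at h4
  unfold MI
  linarith

theorem eq_of_ne_zero_of_marginal {r n ℓ : ℕ} {γ : Type*} [Fintype γ]
    {q : PCOmega r n ℓ × γ → ℝ} (hq : IsPMF q)
    (hmarg : ∀ s, (∑ t, q (s, t)) = pcSource r n ℓ s) {ω : PCOmega r n ℓ × γ} (h : q ω ≠ 0) :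
    ω.1.2.2.1 (chase ω.1.2.1 ω.1.1) = ω.1.2.2.2 (chase ω.1.2.1 ω.1.1) := by
  by_contra hne
  have h0 := hmarg ω.1
  rw [pcSource, if_neg hne, Finset.sum_eq_zero_iff_of_nonneg fun t _ => hq.1 _] at h0
  exact h (h0 ω.2 (Finset.mem_univ _))

/-- Let `q` be the joint distribution of the pointer-chasing inputs
`(X,Y) ∼ μ_{r,n,ℓ}` together with a transcript `Π^ρ` (taking values in a finite type
`γ`). If `IC_ext(Π) = I(Π^ρ;X,Y) ≥ L` and
`IC_int(Π) = I(Π^ρ;X|Y) + I(Π^ρ;Y|X) ≤ C`, then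
`H(B_{i_r} | Π^ρ) ≤ ℓ + C - L + 2·log₂ n`, where `i_r` is the chased pointer index. -/
theorem stmt_14 (r n ℓ : ℕ) (hn : 0 < n) {γ : Type*} [Fintype γ] [DecidableEq γ]
    (q : PCOmega r n ℓ × γ → ℝ) (hq : IsPMF q)
    (hmarg : ∀ s, (∑ t, q (s, t)) = pcSource r n ℓ s)
    (C L : ℝ)
    (hext : MI q Prod.snd (fun ω => (aliceInput ω.1, bobInput ω.1)) ≥ L)
    (hint : condMI q Prod.snd (fun ω => aliceInput ω.1) (fun ω => bobInput ω.1)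
          + condMI q Prod.snd (fun ω => bobInput ω.1) (fun ω => aliceInput ω.1) ≤ C) :
    condH q (fun ω => ω.1.2.2.2 (chase ω.1.2.1 ω.1.1)) Prod.snd
      ≤ (ℓ : ℝ) + C - L + 2 * Real.logb 2 n := by
  have : Nonempty (Fin n) := ⟨⟨0, hn⟩⟩
  have hMI := MI_inputs_le r n ℓ hn hq hmarg
  have hS := Hent_common_part_le hq (fun ω => aliceInput ω.1) (fun ω => bobInput ω.1) Prod.snd
    (fun ω => chase ω.1.2.1 ω.1.1) (fun ω => ω.1.2.2.2 (chase ω.1.2.1 ω.1.1))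
    (fun ω ω' h h' e hW => by
      rw [← eq_of_ne_zero_of_marginal hq hmarg h, ← eq_of_ne_zero_of_marginal hq hmarg h', hW]
      exact congrFun (congrArg Prod.snd e) _)
    (fun ω ω' _ _ e hW => by
      rw [hW]
      exact congrFun (congrArg (fun y => y.2.2) e) _)
  have hIC := condMI_add_condMI_sub_MI hq.1 (fun ω => aliceInput ω.1) (fun ω => bobInput ω.1)
    Prod.snd
  rw [Fintype.card_fin] at hS
  unfold condH
  linarith

end
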